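/- arXiv:1506.02169 — 2 statements merged into one kernel-verified Lean document; each statement's English description precedes it below -/
import Mathlib

section
/- Let μ₀ and μ₁ be probability measures on a measurable space X with μ₀ absolutely continuous with respect to μ₁, and let r : X → [0,∞) be a version of the Radon–Nikodym derivative dμ₀/dμ₁. Let s : X → ℝ be a measurable map and suppose there exists a measurable function g : ℝ → [0,∞) such that r = g ∘ s holds μ₁-almost everywhere (in particular this holds when s = m ∘ r for an injective map m with measurable inverse on its range). Then the pushforward measure s⁎μ₀ is absolutely continuous with respect to s⁎μ₁, and for μ₁-almost every x, the Radon–Nikodym derivative d(s⁎μ₀)/d(s⁎μ₁) evaluated at s(x) equals r(x). In other words, the likelihood ratio is invariant under the dimensionality reduction s whenever s is a (monotone) function of the density ratio. -/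
open MeasureTheory
open scoped ENNReal

/-- **Invariance of the likelihood ratio under dimensionality reduction.**
If `μ₀ ≪ μ₁` are probability measures on `X`, `r` is a version of the
Radon–Nikodym derivative `dμ₀/dμ₁`, and the measurable score map `s : X → ℝ`
satisfies `r = g ∘ s` μ₁-a.e. for some measurable `g`, then the pushforward
`s⁎μ₀` is absolutely continuous w.r.t. `s⁎μ₁` and
`d(s⁎μ₀)/d(s⁎μ₁) (s x) = r x` for `μ₁`-a.e. `x`. -/
theorem likelihood_ratio_invariant_under_reduction
    {X : Type*} [MeasurableSpace X]
    (μ₀ μ₁ : Measure X) [IsProbabilityMeasure μ₀] [IsProbabilityMeasure μ₁]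
    (hac : μ₀ ≪ μ₁)
    (r : X → ℝ≥0∞) (hr_meas : Measurable r)
    (hr : ∀ A : Set X, MeasurableSet A → μ₀ A = ∫⁻ x in A, r x ∂μ₁)
    (s : X → ℝ) (hs : Measurable s)
    (g : ℝ → ℝ≥0∞) (hg : Measurable g)
    (hfact : r =ᵐ[μ₁] g ∘ s) :
    (μ₀.map s) ≪ (μ₁.map s) ∧
      ∀ᵐ x ∂μ₁, (μ₀.map s).rnDeriv (μ₁.map s) (s x) = r x := by
  -- By change of variables, `g` is a density of `s⁎μ₀` with respect to `s⁎μ₁`.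
  have hmap : μ₀.map s = (μ₁.map s).withDensity g := by
    ext B hB
    rw [Measure.map_apply hs hB, hr _ (hs hB), withDensity_apply _ hB,
      setLIntegral_map hB hg hs]
    exact lintegral_congr_ae (ae_restrict_of_ae hfact)
  have : IsProbabilityMeasure (μ₁.map s) := Measure.isProbabilityMeasure_map hs.aemeasurable
  refine ⟨hac.map hs, ?_⟩
  have hrn : (μ₀.map s).rnDeriv (μ₁.map s) =ᵐ[μ₁.map s] g := by
    rw [hmap]
    exact Measure.rnDeriv_withDensity _ hg
  filter_upwards [ae_of_ae_map hs.aemeasurable hrn, hfact] with x hx hrx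
  rw [hx, hrx, Function.comp_apply]
end

section
/- Let μ₀ and μ₁ be probability measures on ℝ^p that are absolutely continuous with respect to Lebesgue measure, with densities p₀ and p₁ satisfying p₁(x) > 0 for Lebesgue-almost every x, and let r(x) = p₀(x)/p₁(x). Let m : [0,∞) → ℝ be a strictly monotone (hence injective) measurable map with measurable inverse on its range, and set s = m ∘ r. Suppose the pushforward measures s⁎μ₀ and s⁎μ₁ admit densities q₀ and q₁ with respect to a common σ-finite measure on ℝ. Then s⁎μ₀ ≪ s⁎μ₁ and for μ₁-almost every x with q₁(s(x)) > 0, q₀(s(x)) / q₁(s(x)) = p₀(x) / p₁(x). -/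
/-!
Since `p₁ > 0` a.e., `μ₀` has density `r` with respect to `μ₁`. The map `m` is inverted on
`[0, ∞)` by `minv`, so `r = minv ∘ s` is a function of the score; hence the pushforward
`s⁎μ₀` has density `minv` with respect to `s⁎μ₁` (`map_withDensity_comp`). This gives absolute
continuity, and comparing densities with respect to `lam` gives `q₀ = q₁ * minv` `lam`-a.e.
Pulling this identity back along `s` and dividing by `q₁ (s x)`, which is a.e. finite,
yields `q₀ (s x) / q₁ (s x) = minv (s x) = r x`.
-/

open MeasureTheory
open scoped ENNReal

/-- A density that factors through `f` is carried along by the pushforward under `f`. -/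
lemma map_withDensity_comp {α β : Type*} [MeasurableSpace α] [MeasurableSpace β]
    (μ : Measure α) {f : α → β} (hf : Measurable f) {g : β → ℝ≥0∞} (hg : Measurable g) :
    (μ.withDensity (g ∘ f)).map f = (μ.map f).withDensity g := by
  ext A hA
  rw [Measure.map_apply hf hA, withDensity_apply _ (hf hA), withDensity_apply _ hA,
    setLIntegral_map hA hg hf]
  rfl

/-- **Theorem 1 of the paper.** Let `μ₀, μ₁` be probability measures on `ℝ^p`
with Lebesgue densities `p₀, p₁`, where `p₁ > 0` a.e., and let
`r = p₀/p₁`. Let `m` be strictly monotone on `[0,∞)`, measurable, with a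
measurable inverse on its range, and set `s = m ∘ r`. If the pushforwards
`s⁎μ₀, s⁎μ₁` have densities `q₀, q₁` w.r.t. a common σ-finite measure on `ℝ`,
then `s⁎μ₀ ≪ s⁎μ₁` and for `μ₁`-a.e. `x` with `q₁ (s x) > 0`,
`q₀(s x)/q₁(s x) = p₀ x / p₁ x`. -/
theorem density_ratio_eq_score_density_ratio
    {p : ℕ}
    (μ₀ μ₁ : Measure (Fin p → ℝ)) [IsProbabilityMeasure μ₀] [IsProbabilityMeasure μ₁]
    (p₀ p₁ : (Fin p → ℝ) → ℝ)
    (hp₀_nonneg : ∀ x, 0 ≤ p₀ x) (hp₁_nonneg : ∀ x, 0 ≤ p₁ x)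
    (hp₀_meas : Measurable p₀) (hp₁_meas : Measurable p₁)
    (hμ₀ : μ₀ = volume.withDensity (fun x => ENNReal.ofReal (p₀ x)))
    (hμ₁ : μ₁ = volume.withDensity (fun x => ENNReal.ofReal (p₁ x)))
    (hp₁_pos : ∀ᵐ x ∂(volume : Measure (Fin p → ℝ)), 0 < p₁ x)
    (r : (Fin p → ℝ) → ℝ) (hr : ∀ x, r x = p₀ x / p₁ x)
    (m : ℝ → ℝ) (hm_meas : Measurable m)
    (hm_mono : StrictMonoOn m (Set.Ici 0) ∨ StrictAntiOn m (Set.Ici 0))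
    (minv : ℝ → ℝ) (hminv_meas : Measurable minv)
    (hminv : ∀ t : ℝ, 0 ≤ t → minv (m t) = t)
    (s : (Fin p → ℝ) → ℝ) (hs : s = m ∘ r)
    (lam : Measure ℝ) [SigmaFinite lam]
    (q₀ q₁ : ℝ → ℝ≥0∞) (hq₀_meas : Measurable q₀) (hq₁_meas : Measurable q₁)
    (hq₀ : μ₀.map s = lam.withDensity q₀)
    (hq₁ : μ₁.map s = lam.withDensity q₁) :
    μ₀.map s ≪ μ₁.map s ∧
      ∀ᵐ x ∂μ₁, 0 < q₁ (s x) →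
        (q₀ (s x) / q₁ (s x)).toReal = p₀ x / p₁ x := by
  have hr_meas : Measurable r := by
    rw [funext hr]
    exact hp₀_meas.div hp₁_meas
  have hs_meas : Measurable s := hs ▸ hm_meas.comp hr_meas
  have hr_score : ∀ x, minv (s x) = r x := fun x => by
    rw [hs]
    exact hminv _ (hr x ▸ div_nonneg (hp₀_nonneg x) (hp₁_nonneg x))
  set g : ℝ → ℝ≥0∞ := fun u => ENNReal.ofReal (minv u) with hg_def
  have hg : Measurable g := hminv_meas.ennreal_ofReal
  have hμ : μ₀ = μ₁.withDensity (g ∘ s) := by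
    rw [hμ₀, hμ₁, ← withDensity_mul _ hp₁_meas.ennreal_ofReal (hg.comp hs_meas)]
    refine withDensity_congr_ae ?_
    filter_upwards [hp₁_pos] with x hx
    simp only [Pi.mul_apply, Function.comp_apply, hg_def, hr_score, hr]
    rw [← ENNReal.ofReal_mul hx.le, mul_div_cancel₀ _ hx.ne']
  have hmap : μ₀.map s = (μ₁.map s).withDensity g := by
    rw [hμ, map_withDensity_comp μ₁ hs_meas hg]
  refine ⟨hmap ▸ withDensity_absolutelyContinuous _ _, ?_⟩
  have hq : q₀ =ᵐ[lam] q₁ * g := by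
    rw [← withDensity_eq_iff_of_sigmaFinite hq₀_meas.aemeasurable (hq₁_meas.mul hg).aemeasurable,
      withDensity_mul _ hq₁_meas hg, ← hq₀, ← hq₁, hmap]
  have hq₁_int : ∫⁻ u, q₁ u ∂lam ≠ ∞ := by
    rw [← setLIntegral_univ, ← withDensity_apply _ MeasurableSet.univ, ← hq₁,
      Measure.map_apply hs_meas MeasurableSet.univ]
    exact measure_ne_top _ _
  have hac : μ₁.map s ≪ lam := hq₁ ▸ withDensity_absolutelyContinuous _ _
  have hq_score := ae_of_ae_map hs_meas.aemeasurable (hac.ae_le hq)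
  have hfin_score :=
    ae_of_ae_map hs_meas.aemeasurable (hac.ae_le (ae_lt_top hq₁_meas hq₁_int))
  filter_upwards [hq_score, hfin_score] with x hx hfin hpos
  rw [hx, Pi.mul_apply, mul_comm, ENNReal.mul_div_cancel_right hpos.ne' hfin.ne, ← hr x,
    ← hr_score x]
  exact ENNReal.toReal_ofReal
    (hr_score x ▸ hr x ▸ div_nonneg (hp₀_nonneg x) (hp₁_nonneg x))
end
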